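/- Let m, n ∈ ℕ and let s_{j,ℓ} ∈ ℂ with Re(s_{j,ℓ}) > 0 for all 1 ≤ j ≤ n, 1 ≤ ℓ ≤ m, and assume s_{j,ℓ} + conj(s_{k,ℓ}) ≠ 1 for all j, k, ℓ. Then the n×n complex matrix whose (j,k) entry is ∏_{ℓ=1}^{m} (1 − 2^{1 − s_{j,ℓ} − conj(s_{k,ℓ})}) Γ(s_{j,ℓ} + conj(s_{k,ℓ})) ζ(s_{j,ℓ} + conj(s_{k,ℓ})) is positive semidefinite, where Γ is the Gamma function and ζ is the Riemann zeta function. -/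

import Mathlib

open Complex ComplexOrder

open Filter Topology Set MeasureTheory

lemma continuous_inv_exp_add_one :
    Continuous fun u : ℝ ↦ (((Real.exp u + 1)⁻¹ : ℝ) : ℂ) :=
  continuous_ofReal.comp <|
    (Real.continuous_exp.add continuous_const).inv₀ fun u ↦ (add_pos (Real.exp_pos u) one_pos).ne'

lemma isBigO_inv_exp_add_one_atTop :
    (fun u : ℝ ↦ (((Real.exp u + 1)⁻¹ : ℝ) : ℂ)) =O[atTop] fun u ↦ Real.exp (-1 * u) := by
  refine Asymptotics.IsBigO.of_bound 1 (Eventually.of_forall fun u ↦ ?_)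
  rw [norm_real, Real.norm_of_nonneg (by positivity), Real.norm_of_nonneg (by positivity),
    neg_one_mul, Real.exp_neg, one_mul]
  exact inv_anti₀ (Real.exp_pos u) (by linarith)

lemma isBigO_inv_exp_add_one_zero :
    (fun u : ℝ ↦ (((Real.exp u + 1)⁻¹ : ℝ) : ℂ)) =O[𝓝[>] 0] fun u : ℝ ↦ u ^ (-0 : ℝ) := by
  refine Asymptotics.IsBigO.of_bound 1 (Eventually.of_forall fun u ↦ ?_)
  rw [norm_real, Real.norm_of_nonneg (by positivity), neg_zero, Real.rpow_zero, norm_one, one_mul]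
  exact inv_le_one_of_one_le₀ (by linarith [Real.exp_pos u])

lemma mellinConvergent_inv_exp_add_one {s : ℂ} (hs : 0 < s.re) :
    MellinConvergent (fun u : ℝ ↦ (((Real.exp u + 1)⁻¹ : ℝ) : ℂ)) s :=
  mellinConvergent_of_isBigO_rpow_exp one_pos
    (continuous_inv_exp_add_one.locallyIntegrable.locallyIntegrableOn _)
    isBigO_inv_exp_add_one_atTop isBigO_inv_exp_add_one_zero hs

lemma differentiableAt_mellin_inv_exp_add_one {s : ℂ} (hs : 0 < s.re) :
    DifferentiableAt ℂ (mellin fun u : ℝ ↦ (((Real.exp u + 1)⁻¹ : ℝ) : ℂ)) s :=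
  mellin_differentiableAt_of_isBigO_rpow_exp one_pos
    (continuous_inv_exp_add_one.locallyIntegrable.locallyIntegrableOn _)
    isBigO_inv_exp_add_one_atTop isBigO_inv_exp_add_one_zero hs

lemma hasSum_inv_exp_add_one {u : ℝ} (hu : 0 < u) :
    HasSum (fun n : ℕ ↦ (-1 : ℂ) ^ n * Real.exp (-(n + 1 : ℝ) * u))
      (((Real.exp u + 1)⁻¹ : ℝ) : ℂ) := by
  have h : |-Real.exp (-u)| < 1 := by
    rw [abs_neg, abs_of_pos (Real.exp_pos _)]
    exact Real.exp_lt_one_iff.mpr (by linarith)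
  have h' := (hasSum_geometric_of_abs_lt_one h).mul_left (Real.exp (-u))
  have h'' : HasSum (fun n : ℕ ↦ (-1 : ℝ) ^ n * Real.exp (-(n + 1 : ℝ) * u))
      (Real.exp u + 1)⁻¹ := by
    convert! h' using 1
    · ext n
      rw [neg_pow (Real.exp (-u)), ← Real.exp_nat_mul, mul_left_comm, ← Real.exp_add]
      ring_nf
    · rw [Real.exp_neg]
      have := Real.exp_pos u
      rw [sub_neg_eq_add, ← mul_inv, mul_add, mul_one, mul_inv_cancel₀ this.ne']
  exact_mod_cast hasSum_ofReal.mpr h''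

/-- The Dirichlet eta series, in the half-plane of absolute convergence. -/
lemma hasSum_alternating_zeta {s : ℂ} (hs : 1 < s.re) :
    HasSum (fun n : ℕ ↦ (-1 : ℂ) ^ n / ((n + 1 : ℝ) : ℂ) ^ s)
      ((1 - 2 ^ (1 - s)) * riemannZeta s) := by
  have hz : HasSum (fun n : ℕ ↦ 1 / (n + 1 : ℂ) ^ s) (riemannZeta s) := by
    rw [zeta_eq_tsum_one_div_nat_add_one_cpow hs]
    refine Summable.hasSum ?_
    have := (summable_nat_add_iff 1).mpr (Complex.summable_one_div_nat_cpow.mpr hs)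
    simpa using this
  have hd : HasSum (fun n : ℕ ↦ (1 - (-1 : ℂ) ^ n) / (n + 1 : ℂ) ^ s)
      (0 + 2 ^ (1 - s) * riemannZeta s) := by
    refine HasSum.even_add_odd ?_ ?_
    · simp
    · convert! hz.mul_left (2 ^ (1 - s)) using 2 with n
      have h1 : ((2 * n + 1 : ℕ) : ℂ) + 1 = ((2 : ℕ) : ℂ) * ((n + 1 : ℕ) : ℂ) := by
        push_cast
        ring
      rw [h1, natCast_mul_natCast_cpow, Complex.cpow_sub _ _ two_ne_zero, pow_succ, pow_mul]
      push_cast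
      simp only [neg_one_sq, one_pow, cpow_one]
      ring
  convert! hz.sub hd using 1
  · ext n
    push_cast
    ring
  · ring

lemma mellin_inv_exp_add_one_of_one_lt_re {s : ℂ} (hs : 1 < s.re) :
    mellin (fun u : ℝ ↦ (((Real.exp u + 1)⁻¹ : ℝ) : ℂ)) s =
      (1 - 2 ^ (1 - s)) * Gamma s * riemannZeta s := by
  have h := hasSum_mellin (a := fun n : ℕ ↦ (-1 : ℂ) ^ n) (p := fun n : ℕ ↦ (n + 1 : ℝ)) (s := s)
    (fun n ↦ Or.inr (by positivity)) (by linarith) (fun u hu ↦ hasSum_inv_exp_add_one hu) ?_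
  · have h' := (hasSum_alternating_zeta hs).mul_left (Gamma s)
    simp only [← mul_div_assoc] at h'
    rw [h.unique h']
    ring
  · have := (summable_nat_add_iff 1).mpr (Real.summable_one_div_nat_rpow.mpr hs)
    simpa using this

lemma differentiable_update_sub_one_mul_riemannZeta :
    Differentiable ℂ (Function.update (fun s : ℂ ↦ (s - 1) * riemannZeta s) 1 1) := by
  rw [← differentiableOn_univ,
    ← differentiableOn_compl_singleton_and_continuousAt_iff (c := 1) univ_mem]
  refine ⟨fun s hs ↦ ?_, continuousAt_update_same.mpr riemannZeta_residue_one⟩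
  have hs' : s ≠ 1 := hs.2
  have hd : DifferentiableAt ℂ (fun s : ℂ ↦ (s - 1) * riemannZeta s) s :=
    (differentiableAt_id.sub_const 1).mul (differentiableAt_riemannZeta hs')
  refine (hd.congr_of_eventuallyEq ?_).differentiableWithinAt
  filter_upwards [isOpen_compl_singleton.mem_nhds hs'] with z hz
  exact Function.update_of_ne hz _ _

/-- The Mellin transform of `u ↦ 1 / (e ^ u + 1)` on the right half-plane. -/
lemma mellin_inv_exp_add_one {s : ℂ} (hs : 0 < s.re) (hs1 : s ≠ 1) :
    mellin (fun u : ℝ ↦ (((Real.exp u + 1)⁻¹ : ℝ) : ℂ)) s =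
      (1 - 2 ^ (1 - s)) * Gamma s * riemannZeta s := by
  have hU : IsOpen {z : ℂ | 0 < z.re} := isOpen_lt continuous_const continuous_re
  have hf : AnalyticOnNhd ℂ
      (fun z ↦ (z - 1) * mellin (fun u : ℝ ↦ (((Real.exp u + 1)⁻¹ : ℝ) : ℂ)) z)
      {z : ℂ | 0 < z.re} :=
    DifferentiableOn.analyticOnNhd (fun z hz ↦ ((differentiableAt_id.sub_const 1).mul
      (differentiableAt_mellin_inv_exp_add_one hz)).differentiableWithinAt) hU
  have hg : AnalyticOnNhd ℂ
      (fun z ↦ (1 - 2 ^ (1 - z)) * Gamma z *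
        Function.update (fun s : ℂ ↦ (s - 1) * riemannZeta s) 1 1 z) {z : ℂ | 0 < z.re} := by
    refine DifferentiableOn.analyticOnNhd (fun z hz ↦ DifferentiableAt.differentiableWithinAt ?_) hU
    refine DifferentiableAt.mul (DifferentiableAt.mul ?_ ?_)
      (differentiable_update_sub_one_mul_riemannZeta z)
    · exact ((differentiableAt_id.const_sub 1).const_cpow (.inl two_ne_zero)).const_sub 1
    · refine differentiableAt_Gamma z fun m hm ↦ ?_
      have hz' : 0 < z.re := hz
      rw [hm, neg_re, natCast_re] at hz'
      linarith [(m.cast_nonneg : (0 : ℝ) ≤ m)]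
  have heq := hf.eqOn_of_preconnected_of_eventuallyEq hg
    (convex_halfSpace_re_gt 0).isPreconnected (show (2 : ℂ) ∈ {z : ℂ | 0 < z.re} by simp) ?_ hs
  · simp only [Function.update_of_ne hs1] at heq
    refine mul_left_cancel₀ (sub_ne_zero.mpr hs1) (heq.trans ?_)
    ring
  · have hV : {z : ℂ | 1 < z.re} ∈ 𝓝 2 :=
      (isOpen_lt continuous_const continuous_re).mem_nhds (by simp)
    filter_upwards [hV] with z hz
    have hz1 : z ≠ 1 := fun h ↦ by simp [h] at hz
    rw [mellin_inv_exp_add_one_of_one_lt_re hz, Function.update_of_ne hz1]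
    ring

/-- The kernel `(z, w) ↦ ∫ u ^ (z + conj w - 1) f u` attached to a nonnegative weight `f` is
positive semidefinite. -/
lemma posSemidef_mellin_add_conj {ι : Type*} [Fintype ι] {f : ℝ → ℝ} (hf : ∀ u, 0 ≤ f u)
    (z : ι → ℂ)
    (hc : ∀ j k, MellinConvergent (fun u ↦ (f u : ℂ)) (z j + (starRingEnd ℂ) (z k))) :
    (Matrix.of fun j k ↦
      mellin (fun u ↦ (f u : ℂ)) (z j + (starRingEnd ℂ) (z k))).PosSemidef := by
  have hconj (u : ℝ) (hu : 0 < u) (w : ℂ) :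
      (starRingEnd ℂ) ((u : ℂ) ^ w) = (u : ℂ) ^ (starRingEnd ℂ) w := by
    rw [cpow_conj _ _ (by simp [arg_ofReal_of_nonneg hu.le, Real.pi_pos.ne]), conj_ofReal]
  refine .of_dotProduct_mulVec_nonneg ?_ fun x ↦ ?_
  · ext j k
    simp only [Matrix.conjTranspose_apply, Matrix.of_apply, mellin]
    rw [RCLike.star_def, ← integral_conj]
    refine setIntegral_congr_fun measurableSet_Ioi fun u hu ↦ ?_
    simp [hconj u hu, add_comm]
  · have hq : dotProduct (star x) ((Matrix.of fun j k ↦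
        mellin (fun u ↦ (f u : ℂ)) (z j + (starRingEnd ℂ) (z k))).mulVec x) =
        ∫ u in Ioi (0 : ℝ), ∑ j, ∑ k, (starRingEnd ℂ) (x j) *
          (((u : ℂ) ^ (z j + (starRingEnd ℂ) (z k) - 1) • (f u : ℂ)) * x k) := by
      have hint (j k : ι) : Integrable (fun u : ℝ ↦ (starRingEnd ℂ) (x j) *
          (((u : ℂ) ^ (z j + (starRingEnd ℂ) (z k) - 1) • (f u : ℂ)) * x k))
          (volume.restrict (Ioi 0)) := ((hc j k).mul_const (x k)).const_mul _
      rw [integral_finsetSum _ fun j _ ↦ integrable_finsetSum _ fun k _ ↦ hint j k]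
      simp only [dotProduct, Matrix.mulVec, Finset.mul_sum, Matrix.of_apply, Pi.star_apply,
        RCLike.star_def]
      refine Finset.sum_congr rfl fun j _ ↦ ?_
      rw [integral_finsetSum _ fun k _ ↦ hint j k]
      refine Finset.sum_congr rfl fun k _ ↦ ?_
      rw [integral_const_mul, integral_mul_const, mellin]
    have hsq : ∀ u ∈ Ioi (0 : ℝ), (∑ j, ∑ k, (starRingEnd ℂ) (x j) *
          (((u : ℂ) ^ (z j + (starRingEnd ℂ) (z k) - 1) • (f u : ℂ)) * x k)) =
        ((normSq (∑ j, (starRingEnd ℂ) (x j) * (u : ℂ) ^ z j) * (f u / u) : ℝ) : ℂ) := by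
      intro u hu
      have hu0 : (u : ℂ) ≠ 0 := ofReal_ne_zero.mpr (ne_of_gt hu)
      rw [ofReal_mul, ← mul_conj, map_sum, Finset.sum_mul_sum, Finset.sum_mul]
      refine Finset.sum_congr rfl fun j _ ↦ ?_
      rw [Finset.sum_mul]
      refine Finset.sum_congr rfl fun k _ ↦ ?_
      rw [map_mul, conj_conj, hconj u hu, cpow_sub _ _ hu0, cpow_add _ _ hu0, cpow_one,
        smul_eq_mul, ofReal_div]
      ring
    rw [hq, setIntegral_congr_fun measurableSet_Ioi hsq, integral_complex_ofReal, zero_le_real]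
    refine setIntegral_nonneg measurableSet_Ioi fun u hu ↦ ?_
    exact mul_nonneg (normSq_nonneg _) (div_nonneg (hf u) (le_of_lt hu))

/-- Schur product theorem for a finite family of matrices. -/
lemma posSemidef_of_prod {ι κ : Type*} [Finite ι] (t : Finset κ) {A : κ → Matrix ι ι ℂ}
    (hA : ∀ l ∈ t, (A l).PosSemidef) :
    (Matrix.of fun j k ↦ ∏ l ∈ t, A l j k).PosSemidef := by
  classical
  induction t using Finset.induction_on with
  | empty =>
    have := Matrix.posSemidef_vecMulVec_self_star (fun _ : ι ↦ (1 : ℂ))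
    convert! this using 1
    ext j k
    simp [Matrix.vecMulVec_apply]
  | insert l t hl ih =>
    have := (hA l (Finset.mem_insert_self l t)).hadamard
      (ih fun i hi ↦ hA i (Finset.mem_insert_of_mem hi))
    convert! this using 1
    ext j k
    simp [Finset.prod_insert hl]

/-- For `s_{j,ℓ} ∈ ℂ` with `Re(s_{j,ℓ}) > 0` and `s_{j,ℓ} + conj s_{k,ℓ} ≠ 1`, the matrix
with `(j,k)` entry
`∏_{ℓ=1}^m (1 - 2^{1 - s_{j,ℓ} - conj s_{k,ℓ}}) Γ(s_{j,ℓ} + conj s_{k,ℓ}) ζ(s_{j,ℓ} + conj s_{k,ℓ})`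
is positive semidefinite. -/
theorem eta_gamma_zeta_matrix_posSemidef (m n : ℕ) (s : Fin n → Fin m → ℂ)
    (hs : ∀ j l, 0 < (s j l).re)
    (hne : ∀ j k l, s j l + (starRingEnd ℂ) (s k l) ≠ 1) :
    ∀ c : Fin n → ℂ,
      0 ≤ ∑ j : Fin n, ∑ k : Fin n,
        (∏ l : Fin m,
            (1 - (2 : ℂ) ^ (1 - s j l - (starRingEnd ℂ) (s k l)))
              * Complex.Gamma (s j l + (starRingEnd ℂ) (s k l))
              * riemannZeta (s j l + (starRingEnd ℂ) (s k l)))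
          * c j * (starRingEnd ℂ) (c k) := by
  intro c
  have hre (j k l) : 0 < (s j l + (starRingEnd ℂ) (s k l)).re := by
    rw [add_re, conj_re]
    linarith [hs j l, hs k l]
  have hP := posSemidef_of_prod Finset.univ fun l _ ↦
    posSemidef_mellin_add_conj (f := fun u ↦ (Real.exp u + 1)⁻¹) (fun u ↦ by positivity)
      (fun j ↦ s j l) fun j k ↦ mellinConvergent_inv_exp_add_one (hre j k l)
  refine (hP.dotProduct_mulVec_nonneg fun j ↦ (starRingEnd ℂ) (c j)).trans_eq ?_
  simp only [dotProduct, Matrix.mulVec, Finset.mul_sum, Matrix.of_apply, Pi.star_apply,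
    RCLike.star_def, conj_conj]
  refine Finset.sum_congr rfl fun j _ ↦ Finset.sum_congr rfl fun k _ ↦ ?_
  rw [Finset.prod_congr rfl fun l _ ↦ mellin_inv_exp_add_one (hre j k l) (hne j k l)]
  simp only [sub_sub]
  ring
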